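/- Let p = 2, let (G,N) be a pair of finite 2-groups, let σ : N* → G be a relative central extension of (G,N), and let H be a G-invariant subgroup of N*. If [H,G] ≤ 𝕌₂(H), then [𝕌₁(H), G] ≤ 𝕌₂(𝕌₁(H)). (This is the claim established in the proof of Lemma 3.9(ii); along the way one shows 𝕌₂(H) ≤ Z(H,G), [𝕌₁(H),G] = 𝕌₁([H,G]), and 𝕌₁(𝕌₂(H)) = 𝕌₃(H) ≤ 𝕌₂(𝕌₁(H)).) -/

import Mathlib

/-!
Write `[x, g] = x⁻¹ x^g`, `P = 𝕌₁(H)`, `K = [P, G]`, `L = 𝕌₂(P)`.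

*Reduction.*  As `G` is a finite `2`-group, `G` is nilpotent; since `σ` maps the iterated
commutators `[N*, G, …, G]` into the lower central series of `G`, and `G` acts trivially on `ker σ`,
these iterated commutators eventually vanish (`exists_iterComm_eq_bot`). No finiteness of `N*` is
needed.  Hence `K ≤ L [K, G]` already implies `K ≤ L` (`le_of_le_sup_commSub`).

*Core.*  Modulo the `G`-invariant normal subgroup `L [K, G]` we may assume that elements of `P` have
fourth power `1` and that commutators `[x, g]` with `x ∈ P` are fixed by `G`, in particular
centralised by `H`.  Then `x ↦ [x, g]` is multiplicative on `P`, the subgroup `𝕌₂(H)` is abelian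
of exponent two, and for `h ∈ H`, with `c = [h, g] ∈ 𝕌₂(H)`,
`[h², g] = c [c, h] c = c² [c, h] = [c, h]`.
Since `[k⁴, h] = [k², h]²` and `[k², h]⁴ = 1`, every `[c, h]` with `c ∈ 𝕌₂(H)` squares to `1`,
so `[k², h]² = 1` for all `k`; feeding this back in gives `[c, h] = 1`, and therefore
`[h², g] = 1` (`core`).
-/


/-- The iterated commutator subgroup `[N, _k G]`. -/
def iterCommG {G : Type*} [Group G] (N : Subgroup G) : ℕ → Subgroup G
  | 0 => N
  | k + 1 => ⁅iterCommG N k, (⊤ : Subgroup G)⁆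

/-- `𝕌_i(H)`: the subgroup generated by all `p^i`-th powers of elements of `H`. -/
def pPow {G : Type*} [Group G] (p i : ℕ) (H : Subgroup G) : Subgroup G :=
  Subgroup.closure {x | ∃ h ∈ H, x = h ^ p ^ i}

/-- A relative central extension of the pair `(G, N)`. -/
structure RelCentralExt {M G : Type*} [Group M] [Group G] (σ : M →* G) (N : Subgroup G) where
  /-- the action of `G` on `M`, written `m ↦ m^g` in the paper -/
  act : M → G → M
  act_mul : ∀ m n g, act (m * n) g = act m g * act n g
  act_one : ∀ m, act m 1 = m
  act_act : ∀ m g h, act (act m g) h = act m (g * h)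
  range_eq : σ.range = N
  sigma_act : ∀ m g, σ (act m g) = g⁻¹ * σ m * g
  act_sigma : ∀ m m₁, act m (σ m₁) = m₁⁻¹ * m * m₁
  ker_act : ∀ a ∈ σ.ker, ∀ g : G, act a g = a

namespace RelCentralExt

variable {M G : Type*} [Group M] [Group G] {σ : M →* G} {N : Subgroup G}

/-- The `G`-commutator `[m, g] = m⁻¹ · m^g`. -/
def cmt (E : RelCentralExt σ N) (m : M) (g : G) : M := m⁻¹ * E.act m g

/-- The subgroup `[M', G]` generated by all `G`-commutators `[m, g]`, `m ∈ M'`, `g ∈ G`. -/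
def commSub (E : RelCentralExt σ N) (M' : Subgroup M) : Subgroup M :=
  Subgroup.closure {x | ∃ m ∈ M', ∃ g : G, x = E.cmt m g}

/-- The iterated subgroup `[M', _n G]`. -/
def iterComm (E : RelCentralExt σ N) (M' : Subgroup M) : ℕ → Subgroup M
  | 0 => M'
  | n + 1 => E.commSub (E.iterComm M' n)

end RelCentralExt



/-! ### Subgroups generated by powers -/

lemma pow_mem_pPow {M : Type*} [Group M] (p i : ℕ) (H : Subgroup M) {x : M} (hx : x ∈ H) :
    x ^ p ^ i ∈ pPow p i H :=
  Subgroup.subset_closure ⟨x, hx, rfl⟩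

lemma pPow_le {M : Type*} [Group M] (p i : ℕ) (H : Subgroup M) : pPow p i H ≤ H := by
  refine (Subgroup.closure_le _).2 ?_
  rintro _ ⟨x, hx, rfl⟩
  exact H.pow_mem hx _

lemma map_pPow {M Q : Type*} [Group M] [Group Q] (f : M →* Q) (p i : ℕ) (H : Subgroup M) :
    (pPow p i H).map f = pPow p i (H.map f) := by
  unfold pPow
  rw [MonoidHom.map_closure]
  congr 1
  ext y
  constructor
  · rintro ⟨_, ⟨x, hx, rfl⟩, rfl⟩
    exact ⟨f x, Subgroup.mem_map_of_mem f hx, map_pow f x _⟩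
  · rintro ⟨_, ⟨x, hx, rfl⟩, rfl⟩
    exact ⟨x ^ p ^ i, ⟨x, hx, rfl⟩, map_pow f x _⟩

lemma pPow_map_mem {M : Type*} [Group M] (p i : ℕ) (H : Subgroup M) (f : M →* M)
    (hf : ∀ x ∈ H, f x ∈ H) {x : M} (hx : x ∈ pPow p i H) : f x ∈ pPow p i H := by
  have h1 : pPow p i H ≤ (pPow p i H).comap f := by
    refine (Subgroup.closure_le _).2 ?_
    rintro _ ⟨y, hy, rfl⟩
    simp only [Subgroup.coe_comap, Set.mem_preimage, SetLike.mem_coe, map_pow]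
    exact pow_mem_pPow p i H (hf y hy)
  exact h1 hx

lemma pPow_two_le_pPow_one {M : Type*} [Group M] (H : Subgroup M) :
    pPow 2 2 H ≤ pPow 2 1 H := by
  refine (Subgroup.closure_le _).2 ?_
  rintro _ ⟨x, hx, rfl⟩
  have := pow_mem_pPow 2 1 H (H.pow_mem hx 2)
  rwa [← pow_mul] at this

/-! ### The case of exponent four with central commutators -/

/-- If `P = 𝕌₁(H)` has exponent dividing four and `[P, G]` is fixed by `G`, then
`[H, G] ≤ 𝕌₂(H)` forces `G` to fix all squares of elements of `H`.  The action is an arbitrary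
family of endomorphisms containing the conjugations by elements of `H`. -/
lemma core {Q ι : Type*} [Group Q] (Φ : ι → Q →* Q) (H : Subgroup Q)
    (hinv : ∀ m ∈ H, ∀ g, Φ g m ∈ H)
    (hconj : ∀ k ∈ H, ∃ g, ∀ m, Φ g m = k⁻¹ * m * k)
    (h1 : ∀ m ∈ H, ∀ g, m⁻¹ * Φ g m ∈ pPow 2 2 H)
    (h2 : ∀ x ∈ pPow 2 1 H, x ^ 4 = 1)
    (h3 : ∀ x ∈ pPow 2 1 H, ∀ g g', Φ g' (x⁻¹ * Φ g x) = x⁻¹ * Φ g x)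
    {m : Q} (hm : m ∈ H) (g : ι) : Φ g (m ^ 2) = m ^ 2 := by
  have sqP : ∀ k ∈ H, k ^ 2 ∈ pPow 2 1 H := fun k hk => pow_mem_pPow 2 1 H hk
  -- commutators `[x, g]` with `x ∈ 𝕌₁(H)` are centralised by `H` and have exponent four
  have comm : ∀ x ∈ pPow 2 1 H, ∀ g, ∀ k ∈ H, Commute (x⁻¹ * Φ g x) k := by
    intro x hx g k hk
    obtain ⟨g', hg'⟩ := hconj k hk
    have h := h3 x hx g g'
    rw [hg', mul_assoc, inv_mul_eq_iff_eq_mul] at h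
    exact h
  have four : ∀ x ∈ pPow 2 1 H, ∀ g, (x⁻¹ * Φ g x) ^ 4 = 1 := fun x hx g =>
    h2 _ (mul_mem (inv_mem hx) (pPow_map_mem 2 1 H (Φ g) (fun y hy => hinv y hy g) hx))
  have dmul : ∀ x ∈ pPow 2 1 H, ∀ y ∈ pPow 2 1 H, ∀ g,
      (x * y)⁻¹ * Φ g (x * y) = (x⁻¹ * Φ g x) * (y⁻¹ * Φ g y) := by
    intro x hx y hy g
    have h := (comm x hx g y⁻¹ (H.inv_mem (pPow_le _ _ _ hy))).eq
    calc (x * y)⁻¹ * Φ g (x * y) = (y⁻¹ * (x⁻¹ * Φ g x)) * Φ g y := by rw [map_mul]; group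
      _ = (x⁻¹ * Φ g x * y⁻¹) * Φ g y := by rw [h]
      _ = _ := by group
  have dfour : ∀ k ∈ H, ∀ g,
      (k ^ 4)⁻¹ * Φ g (k ^ 4) = ((k ^ 2)⁻¹ * Φ g (k ^ 2)) ^ 2 := by
    intro k hk g
    have h := dmul _ (sqP k hk) _ (sqP k hk) g
    rwa [← pow_add, ← sq] at h
  have ab : ∀ c ∈ pPow 2 2 H, ∀ d ∈ pPow 2 2 H, Commute c d := by
    have gen : ∀ k ∈ H, ∀ l ∈ H, Commute (k ^ 4) (l ^ 4) := by
      intro k hk l hl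
      obtain ⟨g', hg'⟩ := hconj l hl
      have hk4 : k ^ 4 ∈ pPow 2 1 H := pPow_two_le_pPow_one H (pow_mem_pPow 2 2 H hk)
      set u := k ^ 4 with hu
      set a := u⁻¹ * Φ g' u with ha
      have hal : Commute a l := comm u hk4 g' l hl
      -- `u⁻¹ l⁻¹ u = a l⁻¹` with `a` and `l` commuting and `a⁴ = 1`, so `u` commutes with `l⁻⁴`
      have e1 : SemiconjBy u (a * l⁻¹) l⁻¹ := by
        rw [SemiconjBy, ha, hg']; group
      have e2 := e1.pow_right 4
      rw [hal.inv_right.mul_pow, four u hk4 g', one_mul, inv_pow] at e2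
      exact Commute.inv_right_iff.1 e2
    have cen : ∀ (S : Set Q) (x : Q), (∀ s ∈ S, Commute x s) →
        ∀ s ∈ Subgroup.closure S, Commute x s := by
      intro S x hS s hs
      induction hs using Subgroup.closure_induction with
      | mem s hs => exact hS s hs
      | one => exact Commute.one_right x
      | mul s t _ _ h h' => exact h.mul_right h'
      | inv s _ h => exact h.inv_right
    intro c hc d hd
    refine cen _ c ?_ d hd
    rintro _ ⟨l, hl, rfl⟩
    refine (cen _ _ ?_ c hc).symm
    rintro _ ⟨k, hk, rfl⟩
    exact gen l hl k hk
  have invol : ∀ c ∈ pPow 2 2 H, c ^ 2 = 1 := by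
    intro c hc
    induction hc using Subgroup.closure_induction with
    | mem c hc =>
      obtain ⟨k, hk, rfl⟩ := hc
      have h := h2 _ (sqP k hk)
      rw [← pow_mul] at h ⊢
      exact h
    | one => exact one_pow 2
    | mul c d hc hd h h' => rw [(ab c hc d hd).mul_pow, h, h', one_mul]
    | inv c _ h => rw [inv_pow, h, inv_one]
  have key : ∀ k ∈ H, ∀ g, ∃ c ∈ pPow 2 2 H, ∃ g',
      (k ^ 2)⁻¹ * Φ g (k ^ 2) = c⁻¹ * Φ g' c := by
    intro k hk g
    obtain ⟨g', hg'⟩ := hconj k hk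
    set c := k⁻¹ * Φ g k with hc
    have hcm : c ∈ pPow 2 2 H := h1 k hk g
    refine ⟨c, hcm, g', ?_⟩
    have hcom := (comm c (pPow_two_le_pPow_one H hcm) g' c (pPow_le _ _ _ hcm)).eq
    have e : Φ g k = k * c := by rw [hc]; group
    calc (k ^ 2)⁻¹ * Φ g (k ^ 2) = c * ((c⁻¹ * Φ g' c) * c) := by
          rw [map_pow, e, hg', sq, sq]; group
      _ = c ^ 2 * (c⁻¹ * Φ g' c) := by rw [hcom, ← mul_assoc c c, ← sq]
      _ = c⁻¹ * Φ g' c := by rw [invol c hcm, one_mul]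
  have dsq : ∀ c ∈ pPow 2 2 H, ∀ g, (c⁻¹ * Φ g c) ^ 2 = 1 := by
    intro c hc g
    induction hc using Subgroup.closure_induction with
    | mem c hc =>
      obtain ⟨k, hk, rfl⟩ := hc
      have h := dfour k hk g
      norm_num only at h ⊢
      rw [h, ← pow_mul]
      exact four _ (sqP k hk) g
    | one => simp
    | mul c d hc hd h h' =>
      have hc' := pPow_two_le_pPow_one H hc
      have hd' := pPow_two_le_pPow_one H hd
      have hmem : d⁻¹ * Φ g d ∈ H :=
        H.mul_mem (H.inv_mem (pPow_le _ _ _ hd)) (hinv d (pPow_le _ _ _ hd) g)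
      rw [dmul c hc' d hd' g, (comm c hc' g _ hmem).mul_pow, h, h', one_mul]
    | inv c hc h =>
      have hc' := pPow_two_le_pPow_one H hc
      have e := dmul _ (inv_mem hc') c hc' g
      rw [inv_mul_cancel, map_one, inv_one, one_mul] at e
      rw [eq_inv_of_mul_eq_one_left e.symm, inv_pow, h, inv_one]
  have fix : ∀ c ∈ pPow 2 2 H, ∀ g, Φ g c = c := by
    intro c hc g
    have hle : pPow 2 2 H ≤ (Φ g).eqLocus (MonoidHom.id Q) := by
      refine (Subgroup.closure_le _).2 ?_
      rintro _ ⟨k, hk, rfl⟩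
      obtain ⟨c, hc, g', e⟩ := key k hk g
      have h := dfour k hk g
      rw [e, dsq c hc g', inv_mul_eq_one] at h
      exact h.symm
    exact hle hc
  obtain ⟨c, hc, g', e⟩ := key m hm g
  rw [fix c hc g', inv_mul_cancel, inv_mul_eq_one] at e
  exact e.symm

/-! ### Invariant subgroups and nilpotency of the action -/

namespace RelCentralExt

variable {M G : Type*} [Group M] [Group G] {σ : M →* G} {N : Subgroup G}

/-- The endomorphism `m ↦ m^g` of `M`. -/
def actHom (E : RelCentralExt σ N) (g : G) : M →* M :=
  MonoidHom.mk' (fun m => E.act m g) (fun m n => E.act_mul m n g)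

/-- `G`-invariance of a subgroup of `M`. -/
def Inv (E : RelCentralExt σ N) (S : Subgroup M) : Prop := ∀ m ∈ S, ∀ g : G, E.act m g ∈ S

lemma act_inv (E : RelCentralExt σ N) (m : M) (g : G) : E.act m⁻¹ g = (E.act m g)⁻¹ :=
  map_inv (E.actHom g) m

/-- `M` acts on itself by conjugation through `σ`, so invariant subgroups are normal. -/
lemma Inv.normal {E : RelCentralExt σ N} {S : Subgroup M} (hS : E.Inv S) : S.Normal := by
  refine ⟨fun n hn m => ?_⟩
  have h := hS n hn (σ m⁻¹)
  rwa [E.act_sigma, inv_inv] at h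

lemma Inv.pPow {E : RelCentralExt σ N} {S : Subgroup M} (hS : E.Inv S) (p i : ℕ) :
    E.Inv (pPow p i S) :=
  fun _ hm g => pPow_map_mem p i S (E.actHom g) (fun x hx => hS x hx g) hm

lemma cmt_mem_commSub (E : RelCentralExt σ N) {S : Subgroup M} {m : M} (hm : m ∈ S) (g : G) :
    E.cmt m g ∈ E.commSub S :=
  Subgroup.subset_closure ⟨m, hm, g, rfl⟩

lemma Inv.commSub {E : RelCentralExt σ N} {S : Subgroup M} (hS : E.Inv S) :
    E.Inv (E.commSub S) := by
  intro m hm g'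
  have hle : E.commSub S ≤ (E.commSub S).comap (E.actHom g') := by
    refine (Subgroup.closure_le _).2 ?_
    rintro _ ⟨m, hm, g, rfl⟩
    have e : E.act (E.cmt m g) g' = E.cmt (E.act m g') (g'⁻¹ * g * g') := by
      rw [cmt, cmt, E.act_mul, E.act_inv, E.act_act, E.act_act]
      congr 2
      group
    change E.act (E.cmt m g) g' ∈ E.commSub S
    rw [e]
    exact E.cmt_mem_commSub (hS m hm g') _
  exact hle hm

lemma Inv.sup {E : RelCentralExt σ N} {S T : Subgroup M} (hS : E.Inv S) (hT : E.Inv T) :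
    E.Inv (S ⊔ T) := by
  intro m hm g
  have hle : S ⊔ T ≤ (S ⊔ T).comap (E.actHom g) :=
    sup_le (fun x hx => Subgroup.mem_sup_left (hS x hx g))
      (fun x hx => Subgroup.mem_sup_right (hT x hx g))
  exact hle hm

lemma commSub_mono (E : RelCentralExt σ N) {S T : Subgroup M} (h : S ≤ T) :
    E.commSub S ≤ E.commSub T := by
  refine (Subgroup.closure_le _).2 ?_
  rintro _ ⟨m, hm, g, rfl⟩
  exact E.cmt_mem_commSub (h hm) g

lemma commSub_sup_le (E : RelCentralExt σ N) {S T : Subgroup M} (hS : E.Inv S) :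
    E.commSub (S ⊔ T) ≤ S ⊔ E.commSub T := by
  have hn := hS.normal
  refine (Subgroup.closure_le _).2 ?_
  rintro _ ⟨m, hm, g, rfl⟩
  obtain ⟨x, hx, y, hy, rfl⟩ := Subgroup.mem_sup_of_normal_left.1 hm
  have e : E.cmt (x * y) g = (y⁻¹ * (x⁻¹ * E.act x g) * y) * E.cmt y g := by
    rw [cmt, cmt, E.act_mul]; group
  rw [e]
  refine Subgroup.mul_mem_sup ?_ (E.cmt_mem_commSub hy g)
  have h := hn.conj_mem _ (S.mul_mem (S.inv_mem hx) (hS x hx g)) y⁻¹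
  rwa [inv_inv] at h

open scoped commutatorElement in
lemma map_iterComm_le (E : RelCentralExt σ N) (n : ℕ) :
    (E.iterComm ⊤ n).map σ ≤ (⊤ : Subgroup G).lowerCentralSeries n := by
  induction n with
  | zero => exact le_top
  | succ n ih =>
    rw [Subgroup.map_le_iff_le_comap]
    refine (Subgroup.closure_le _).2 ?_
    rintro _ ⟨m, hm, g, rfl⟩
    have h1 := ih (Subgroup.mem_map_of_mem σ hm)
    have h2 : ⁅(σ m)⁻¹, g⁻¹⁆ ∈ ⁅(⊤ : Subgroup G).lowerCentralSeries n, (⊤ : Subgroup G)⁆ :=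
      Subgroup.commutator_mem_commutator (inv_mem h1) (Subgroup.mem_top g⁻¹)
    change σ (m⁻¹ * E.act m g) ∈ ⁅(⊤ : Subgroup G).lowerCentralSeries n, (⊤ : Subgroup G)⁆
    rw [map_mul, E.sigma_act, map_inv]
    convert h2 using 1
    rw [commutatorElement_def]; group

/-- Once the iterated commutators have reached `ker σ`, one more commutator kills them. -/
lemma exists_iterComm_eq_bot (E : RelCentralExt σ N) [Group.IsNilpotent G] :
    ∃ n, E.iterComm ⊤ n = ⊥ := by
  obtain ⟨n, hn⟩ := Subgroup.nilpotent_iff_lowerCentralSeries.1 (inferInstance : Group.IsNilpotent G)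
  refine ⟨n + 1, (eq_bot_iff).2 ?_⟩
  refine (Subgroup.closure_le _).2 ?_
  rintro _ ⟨m, hm, g, rfl⟩
  have h1 := E.map_iterComm_le n (Subgroup.mem_map_of_mem σ hm)
  rw [hn, Subgroup.mem_bot] at h1
  change m⁻¹ * E.act m g = 1
  rw [E.ker_act m h1, inv_mul_cancel]

/-- Nilpotency of the action: an inclusion modulo `[K, G]` is an inclusion. -/
lemma le_of_le_sup_commSub (E : RelCentralExt σ N) [Group.IsNilpotent G] {K L : Subgroup M}
    (hL : E.Inv L) (h : K ≤ L ⊔ E.commSub K) : K ≤ L := by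
  have step : ∀ n, K ≤ L ⊔ E.iterComm ⊤ n := by
    intro n
    induction n with
    | zero => exact le_top.trans le_sup_right
    | succ n ih =>
      exact h.trans (sup_le le_sup_left ((E.commSub_mono ih).trans (E.commSub_sup_le hL)))
  obtain ⟨n, hn⟩ := E.exists_iterComm_eq_bot
  have h' := step n
  rwa [hn, sup_bot_eq] at h'

end RelCentralExt

/-! ### Reduction to the quotient -/

/-- The claim established in the proof of Lemma 3.9(ii): let `(G, N)` be a pair of
finite `2`-groups, `σ : N* → G` a relative central extension of `(G, N)`, and `H` a
`G`-invariant subgroup of `N*`. If `[H, G] ≤ 𝕌₂(H)`, then `[𝕌₁(H), G] ≤ 𝕌₂(𝕌₁(H))`. -/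
theorem stmt_13 {G : Type*} [Group G] [Finite G]
    (hG : IsPGroup 2 G) (N : Subgroup G) (hN : N.Normal)
    {Nstar : Type*} [Group Nstar] (σ : Nstar →* G) (E : RelCentralExt σ N)
    (H : Subgroup Nstar) (hHinv : ∀ m ∈ H, ∀ g : G, E.act m g ∈ H)
    (h : E.commSub H ≤ pPow 2 2 H) :
    E.commSub (pPow 2 1 H) ≤ pPow 2 2 (pPow 2 1 H) := by
  have : Fact (Nat.Prime 2) := ⟨Nat.prime_two⟩
  have : Group.IsNilpotent G := hG.isNilpotent
  have hH : E.Inv H := hHinv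
  have hL : E.Inv (pPow 2 2 (pPow 2 1 H)) := (hH.pPow 2 1).pPow 2 2
  refine E.le_of_le_sup_commSub hL ?_
  set R := pPow 2 2 (pPow 2 1 H) ⊔ E.commSub (E.commSub (pPow 2 1 H)) with hR
  have hRinv : E.Inv R := hL.sup (hH.pPow 2 1).commSub.commSub
  have := hRinv.normal
  let π : Nstar →* Nstar ⧸ R := QuotientGroup.mk' R
  have hπ : ∀ x, π x = 1 ↔ x ∈ R := fun x => QuotientGroup.eq_one_iff x
  -- the action induced on `N* / R`
  let Φ : G → (Nstar ⧸ R) →* (Nstar ⧸ R) := fun g =>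
    QuotientGroup.map R R (E.actHom g) (fun x hx => hRinv x hx g)
  have hΦ : ∀ g x, Φ g (π x) = π (E.act x g) := fun g x => rfl
  have hP : ∀ g, pPow 2 1 H ≤ ((Φ g).comp π).eqLocus π := by
    intro g
    refine (Subgroup.closure_le _).2 ?_
    rintro _ ⟨m, hm, rfl⟩
    change Φ g (π (m ^ 2)) = π (m ^ 2)
    rw [map_pow]
    refine core Φ (H.map π) ?_ ?_ ?_ ?_ ?_ (Subgroup.mem_map_of_mem π hm) g
    · rintro _ ⟨x, hx, rfl⟩ g
      exact Subgroup.mem_map_of_mem π (hH x hx g)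
    · rintro _ ⟨k, hk, rfl⟩
      refine ⟨σ k, fun x => ?_⟩
      obtain ⟨x, rfl⟩ := QuotientGroup.mk'_surjective R x
      change π (E.act x (σ k)) = (π k)⁻¹ * π x * π k
      rw [E.act_sigma, map_mul, map_mul, map_inv]
    · rintro _ ⟨x, hx, rfl⟩ g
      rw [hΦ, ← map_inv, ← map_mul, ← map_pPow]
      exact Subgroup.mem_map_of_mem π (h (E.cmt_mem_commSub hx g))
    · rw [← map_pPow]
      rintro _ ⟨x, hx, rfl⟩
      rw [← map_pow, hπ]
      exact Subgroup.mem_sup_left (pow_mem_pPow 2 2 _ hx)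
    · rw [← map_pPow]
      rintro _ ⟨x, hx, rfl⟩ g g'
      rw [hΦ, ← map_inv, ← map_mul, hΦ, eq_comm, ← inv_mul_eq_one, ← map_inv, ← map_mul, hπ]
      exact Subgroup.mem_sup_right (E.cmt_mem_commSub (E.cmt_mem_commSub hx g) g')
  refine (Subgroup.closure_le _).2 ?_
  rintro _ ⟨x, hx, g, rfl⟩
  have e : π (E.act x g) = π x := hP g hx
  change x⁻¹ * E.act x g ∈ R
  rw [← hπ, map_mul, map_inv, e, inv_mul_cancel]
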